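/- arXiv:2306.05825 — 2 statements merged into one kernel-verified Lean document; each statement's English description precedes it below -/
import Mathlib

section
/- The weighted Sobolev space 𝓗¹(Ω), equipped with the inner product (u,v)_{𝓗¹} = ∫_Ω uv + (y^{α₁}∂ₓu)(y^{α₁}∂ₓv) + (x^{α₂}∂_yu)(x^{α₂}∂_yv) dxdy, is a Hilbert space; in particular, every sequence in 𝓗¹(Ω) that is Cauchy with respect to the norm ‖u‖_{𝓗¹} converges in this norm to an element of 𝓗¹(Ω). -/
open MeasureTheory Set Filter

noncomputable section

/-- The open unit square `Ω = (0,1) × (0,1)` in `ℝ²`. -/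
def Omega : Set (ℝ × ℝ) := Ioo (0:ℝ) 1 ×ˢ Ioo (0:ℝ) 1

/-- Test functions on a set `s`: smooth with compact support contained in `s`. -/
def IsTestOn (s : Set (ℝ × ℝ)) (φ : ℝ × ℝ → ℝ) : Prop :=
  ContDiff ℝ (⊤ : ℕ∞) φ ∧ HasCompactSupport φ ∧ tsupport φ ⊆ s

/-- Classical partial derivative in the `x`-direction. -/
def pdx (φ : ℝ × ℝ → ℝ) (p : ℝ × ℝ) : ℝ := fderiv ℝ φ p (1, 0)

/-- Classical partial derivative in the `y`-direction. -/
def pdy (φ : ℝ × ℝ → ℝ) (p : ℝ × ℝ) : ℝ := fderiv ℝ φ p (0, 1)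

/-- `g` is a weak `x`-partial derivative of `u` on `s`. -/
def HasWeakDerivXOn (s : Set (ℝ × ℝ)) (u g : ℝ × ℝ → ℝ) : Prop :=
  LocallyIntegrableOn u s volume ∧ LocallyIntegrableOn g s volume ∧
  ∀ φ : ℝ × ℝ → ℝ, IsTestOn s φ →
    ∫ p in s, u p * pdx φ p = - ∫ p in s, g p * φ p

/-- `g` is a weak `y`-partial derivative of `u` on `s`. -/
def HasWeakDerivYOn (s : Set (ℝ × ℝ)) (u g : ℝ × ℝ → ℝ) : Prop :=
  LocallyIntegrableOn u s volume ∧ LocallyIntegrableOn g s volume ∧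
  ∀ φ : ℝ × ℝ → ℝ, IsTestOn s φ →
    ∫ p in s, u p * pdy φ p = - ∫ p in s, g p * φ p

/-- Test functions on `Ω`. -/
def IsTest (φ : ℝ × ℝ → ℝ) : Prop := IsTestOn Omega φ

/-- Membership in the weighted Sobolev space `𝓗¹(Ω)`, with weak derivatives `gx, gy`:
`u ∈ L²(Ω)`, `gx = ∂ₓu`, `gy = ∂_y u` weakly, and `y^α₁ gx, x^α₂ gy ∈ L²(Ω)`. -/
structure MemH1 (α₁ α₂ : ℝ) (u gx gy : ℝ × ℝ → ℝ) : Prop where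
  memL2 : MemLp u 2 (volume.restrict Omega)
  weakX : HasWeakDerivXOn Omega u gx
  weakY : HasWeakDerivYOn Omega u gy
  wgx : MemLp (fun p => p.2 ^ α₁ * gx p) 2 (volume.restrict Omega)
  wgy : MemLp (fun p => p.1 ^ α₂ * gy p) 2 (volume.restrict Omega)

/-- The `𝓗¹(Ω)` norm of `u` (with weak derivatives `gx, gy`). -/
def H1Norm (α₁ α₂ : ℝ) (u gx gy : ℝ × ℝ → ℝ) : ℝ :=
  Real.sqrt ((∫ p in Omega, (u p) ^ 2) +
    (∫ p in Omega, (p.2 ^ α₁ * gx p) ^ 2) +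
    (∫ p in Omega, (p.1 ^ α₂ * gy p) ^ 2))

/-- Membership in `𝓗₀¹(Ω)`: member of `𝓗¹(Ω)` approximable in the `𝓗¹` norm by
test functions. -/
def MemH10 (α₁ α₂ : ℝ) (u gx gy : ℝ × ℝ → ℝ) : Prop :=
  MemH1 α₁ α₂ u gx gy ∧
  ∀ ε : ℝ, 0 < ε → ∃ φ : ℝ × ℝ → ℝ, IsTest φ ∧
    H1Norm α₁ α₂ (fun p => u p - φ p) (fun p => gx p - pdx φ p)
      (fun p => gy p - pdy φ p) < ε

/-- Membership in `H₀(Ω) = {u ∈ 𝓗₀¹(Ω) : ∫_Ω V u² < ∞}`. -/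
def MemH0 (α₁ α₂ : ℝ) (V u gx gy : ℝ × ℝ → ℝ) : Prop :=
  MemH10 α₁ α₂ u gx gy ∧
  IntegrableOn (fun p => V p * (u p) ^ 2) Omega volume

/-- The bilinear form `a(u,v)` associated with the sub-elliptic operator with potential `V`. -/
def aForm (α₁ α₂ : ℝ) (V u gx gy v hx hy : ℝ × ℝ → ℝ) : ℝ :=
  ∫ p in Omega, ((p.2 ^ α₁ * gx p) * (p.2 ^ α₁ * hx p) +
    (p.1 ^ α₂ * gy p) * (p.1 ^ α₂ * hy p) + V p * u p * v p)

/-- The bilinear form `a₁(u,v)` (no potential). -/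
def a1Form (α₁ α₂ : ℝ) (u gx gy v hx hy : ℝ × ℝ → ℝ) : ℝ :=
  ∫ p in Omega, ((p.2 ^ α₁ * gx p) * (p.2 ^ α₁ * hx p) +
    (p.1 ^ α₂ * gy p) * (p.1 ^ α₂ * hy p))

/-- Membership in `S_p = {V ∈ L^p(Ω) : V ≥ 0 a.e., ‖V‖_{L^p(Ω)} ≤ M}`. -/
def MemSp (ppow M : ℝ) (V : ℝ × ℝ → ℝ) : Prop :=
  MemLp V (ENNReal.ofReal ppow) (volume.restrict Omega) ∧
  (∀ᵐ p ∂(volume.restrict Omega), 0 ≤ V p) ∧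
  eLpNorm V (ENNReal.ofReal ppow) (volume.restrict Omega) ≤ ENNReal.ofReal M

/-- `u` (with weak derivatives `gx, gy`) is an eigenfunction of the sub-elliptic operator
with potential `V` for the eigenvalue `lam`. -/
def IsEigenfun (α₁ α₂ : ℝ) (V : ℝ × ℝ → ℝ) (lam : ℝ) (u gx gy : ℝ × ℝ → ℝ) : Prop :=
  MemH0 α₁ α₂ V u gx gy ∧
  ∀ v hx hy : ℝ × ℝ → ℝ, MemH0 α₁ α₂ V v hx hy →
    aForm α₁ α₂ V u gx gy v hx hy = lam * ∫ p in Omega, u p * v p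

/-- The first eigenvalue `λ₁(V) = inf { a(u,u) : u ∈ H₀(Ω), ‖u‖_{L²} = 1 }`. -/
def lam1 (α₁ α₂ : ℝ) (V : ℝ × ℝ → ℝ) : ℝ :=
  sInf { r | ∃ u gx gy : ℝ × ℝ → ℝ, MemH0 α₁ α₂ V u gx gy ∧
    (∫ p in Omega, (u p) ^ 2) = 1 ∧ r = aForm α₁ α₂ V u gx gy u gx gy }

/-- `sup { a(u,u) : u ∈ span(φ), ‖u‖_{L²(Ω)} = 1 }` for a finite family `φ` with
weak derivatives `φx, φy`. -/
def rayleighSup (α₁ α₂ : ℝ) (V : ℝ × ℝ → ℝ) {k : ℕ} (φ φx φy : Fin k → ℝ × ℝ → ℝ) : ℝ :=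
  sSup { s | ∃ c : Fin k → ℝ,
    (∫ p in Omega, (∑ i, c i * φ i p) ^ 2) = 1 ∧
    s = aForm α₁ α₂ V (fun p => ∑ i, c i * φ i p) (fun p => ∑ i, c i * φx i p)
      (fun p => ∑ i, c i * φy i p) (fun p => ∑ i, c i * φ i p)
      (fun p => ∑ i, c i * φx i p) (fun p => ∑ i, c i * φy i p) }

/-- The set of values `sup { a(u,u) : u ∈ E, ‖u‖ = 1 }` over `k`-dimensional
subspaces `E` of `H₀(Ω)` (represented by `L²(Ω)`-linearly independent families of
`k` elements of `H₀(Ω)`). -/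
def minmaxSet (α₁ α₂ : ℝ) (V : ℝ × ℝ → ℝ) (k : ℕ) : Set ℝ :=
  { r | ∃ φ φx φy : Fin k → ℝ × ℝ → ℝ,
      (∀ i, MemH0 α₁ α₂ V (φ i) (φx i) (φy i)) ∧
      (∀ c : Fin k → ℝ, (∀ᵐ p ∂(volume.restrict Omega), ∑ i, c i * φ i p = 0) → c = 0) ∧
      r = rayleighSup α₁ α₂ V φ φx φy }

/-- The `k`-th eigenvalue via the min-max principle. -/
def lamk (α₁ α₂ : ℝ) (V : ℝ × ℝ → ℝ) (k : ℕ) : ℝ := sInf (minmaxSet α₁ α₂ V k)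

/-- Membership in `U = (𝓗₀¹(Ω) ∩ L^{2q}(Ω)) \ {0}`. -/
def MemU (α₁ α₂ qe : ℝ) (u gx gy : ℝ × ℝ → ℝ) : Prop :=
  MemH10 α₁ α₂ u gx gy ∧
  MemLp u (ENNReal.ofReal (2 * qe)) (volume.restrict Omega) ∧
  ¬ (∀ᵐ p ∂(volume.restrict Omega), u p = 0)

/-- The functional `J(u) = (a₁(u,u) + M ‖u‖_{L^{2q}(Ω)}²) / ‖u‖_{L²(Ω)}²`. -/
def Jfun (α₁ α₂ M qe : ℝ) (u gx gy : ℝ × ℝ → ℝ) : ℝ :=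
  (a1Form α₁ α₂ u gx gy u gx gy +
    M * (∫ p in Omega, |u p| ^ (2 * qe)) ^ (1 / qe)) / (∫ p in Omega, (u p) ^ 2)

/-!
Each weighted component of a Cauchy sequence converges in `L²(Ω)`. The weights are continuous and
positive on `Ω`, so dividing a test function by a weight gives a continuous function with compact
support in `Ω`; hence weighted `L²` limits are limits against test functions, and the identity
defining the weak derivative survives in the limit after dividing by the weight.
-/

section Lp

variable {ι α F : Type*} [MeasurableSpace α] {μ : Measure α} [NormedAddCommGroup F]
  {p : ENNReal} [Fact (1 ≤ p)]

lemma dist_toLp_eq_lpNorm_sub {f g : α → F} (hf : MemLp f p μ) (hg : MemLp g p μ) :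
    dist (hf.toLp f) (hg.toLp g) = lpNorm (fun x => f x - g x) p μ := by
  rw [dist_eq_norm, ← MemLp.toLp_sub, Lp.norm_toLp, toReal_eLpNorm (hf.sub hg).1]
  rfl

lemma tendsto_toLp_iff_tendsto_lpNorm_sub {l : Filter ι} {f : ι → α → F} {g : α → F}
    (hf : ∀ n, MemLp (f n) p μ) (hg : MemLp g p μ) :
    Tendsto (fun n => (hf n).toLp (f n)) l (nhds (hg.toLp g)) ↔
      Tendsto (fun n => lpNorm (fun x => f n x - g x) p μ) l (nhds 0) := by
  rw [tendsto_iff_dist_tendsto_zero]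
  simp only [dist_toLp_eq_lpNorm_sub]

theorem exists_memLp_tendsto_lpNorm_sub [CompleteSpace F] [Nonempty ι] [SemilatticeSup ι]
    {f : ι → α → F} (hf : ∀ n, MemLp (f n) p μ)
    (hcau : ∀ ε > 0, ∃ N, ∀ m ≥ N, ∀ n ≥ N, lpNorm (fun x => f m x - f n x) p μ < ε) :
    ∃ g, MemLp g p μ ∧ Tendsto (fun n => lpNorm (fun x => f n x - g x) p μ) atTop (nhds 0) := by
  have hcauLp : CauchySeq fun n => (hf n).toLp (f n) := by
    simpa only [Metric.cauchySeq_iff, dist_toLp_eq_lpNorm_sub] using hcau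
  obtain ⟨g, hg⟩ := cauchySeq_tendsto_of_complete hcauLp
  refine ⟨g, Lp.memLp g, ?_⟩
  rwa [← tendsto_toLp_iff_tendsto_lpNorm_sub hf (Lp.memLp g), Lp.toLp_coeFn]

theorem exists_memLp_mul_tendsto_lpNorm_mul_sub [Nonempty ι] [SemilatticeSup ι]
    {w : α → ℝ} (hw : ∀ᵐ x ∂μ, w x ≠ 0) {f : ι → α → ℝ}
    (hf : ∀ n, MemLp (fun x => w x * f n x) p μ)
    (hcau : ∀ ε > 0, ∃ N, ∀ m ≥ N, ∀ n ≥ N, lpNorm (fun x => w x * (f m x - f n x)) p μ < ε) :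
    ∃ g : α → ℝ, MemLp (fun x => w x * g x) p μ ∧
      Tendsto (fun n => lpNorm (fun x => w x * (f n x - g x)) p μ) atTop (nhds 0) := by
  simp only [mul_sub] at hcau ⊢
  obtain ⟨G, hG, hlim⟩ := exists_memLp_tendsto_lpNorm_sub hf hcau
  have hwG : G =ᵐ[μ] fun x => w x * ((w x)⁻¹ * G x) := by
    filter_upwards [hw] with x hx
    rw [mul_inv_cancel_left₀ hx]
  have hmem : MemLp (fun x => w x * ((w x)⁻¹ * G x)) p μ := (memLp_congr_ae hwG).1 hG
  refine ⟨fun x => (w x)⁻¹ * G x, hmem, ?_⟩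
  rwa [← tendsto_toLp_iff_tendsto_lpNorm_sub hf hmem, ← MemLp.toLp_congr hG hmem hwG,
    tendsto_toLp_iff_tendsto_lpNorm_sub hf hG]

lemma tendsto_integral_mul_of_tendsto_lpNorm_sub {q : ENNReal} [Fact (1 ≤ q)]
    [p.HolderConjugate q] {l : Filter ι} {f : ι → α → ℝ} {g ψ : α → ℝ}
    (hf : ∀ n, MemLp (f n) p μ) (hg : MemLp g p μ) (hψ : MemLp ψ q μ)
    (hlim : Tendsto (fun n => lpNorm (fun x => f n x - g x) p μ) l (nhds 0)) :
    Tendsto (fun n => ∫ x, f n x * ψ x ∂μ) l (nhds (∫ x, g x * ψ x ∂μ)) := by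
  let pairing := (ContinuousLinearMap.mul ℝ ℝ).lpPairing μ p q
  have pairing_toLp {f : α → ℝ} (hf : MemLp f p μ) :
      pairing (hf.toLp f) (hψ.toLp ψ) = ∫ x, f x * ψ x ∂μ := by
    rw [ContinuousLinearMap.lpPairing_eq_integral]
    refine integral_congr_ae ?_
    filter_upwards [hf.coeFn_toLp, hψ.coeFn_toLp] with x hfx hψx
    rw [hfx, hψx, ContinuousLinearMap.mul_apply']
  have hlimLp := (tendsto_toLp_iff_tendsto_lpNorm_sub hf hg).2 hlim
  simpa only [Function.comp_def, ContinuousLinearMap.flip_apply, pairing_toLp] using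
    ((pairing.flip (hψ.toLp ψ)).continuous.tendsto _).comp hlimLp

lemma lpNorm_two_sq_eq_integral_sq {f : α → ℝ} (hf : AEStronglyMeasurable f μ) :
    lpNorm f 2 μ ^ 2 = ∫ x, f x ^ 2 ∂μ := by
  rw [lpNorm_eq_integral_norm_rpow_toReal two_ne_zero ENNReal.ofNat_ne_top hf,
    ← Real.rpow_mul_natCast (by positivity)]
  simp

end Lp

section VagueConvergence

variable {ι X : Type*} [TopologicalSpace X] [MeasurableSpace X] {μ : Measure X} {s : Set X}
  {l : Filter ι}

/-- Vague convergence on `s`: the functions `f n`, seen as densities with respect to `μ`, converge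
to `g` when integrated against continuous functions with compact support in `s`. It is the mode
of convergence in which weak derivatives pass to the limit. -/
def TendstoVaguelyOn (s : Set X) (f : ι → X → ℝ) (l : Filter ι) (g : X → ℝ)
    (μ : Measure X) : Prop :=
  ∀ ψ : X → ℝ, Continuous ψ → HasCompactSupport ψ → tsupport ψ ⊆ s →
    Tendsto (fun n => ∫ x in s, f n x * ψ x ∂μ) l (nhds (∫ x in s, g x * ψ x ∂μ))

lemma tendstoVaguelyOn_of_tendsto_lpNorm_sub [OpensMeasurableSpace X]
    [IsFiniteMeasureOnCompacts μ] {p : ENNReal} [Fact (1 ≤ p)] {f : ι → X → ℝ} {g : X → ℝ}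
    (hf : ∀ n, MemLp (f n) p (μ.restrict s)) (hg : MemLp g p (μ.restrict s))
    (hlim : Tendsto (fun n => lpNorm (fun x => f n x - g x) p (μ.restrict s)) l (nhds 0)) :
    TendstoVaguelyOn s f l g μ := by
  intro ψ hψ hψc _
  have : Fact (1 ≤ p.conjExponent) := ⟨ENNReal.HolderConjugate.one_le p.conjExponent p⟩
  exact tendsto_integral_mul_of_tendsto_lpNorm_sub (q := p.conjExponent) hf hg
    ((hψ.memLp_of_hasCompactSupport hψc).restrict s) hlim

theorem TendstoVaguelyOn.of_mul_left [OpensMeasurableSpace X]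
    (hs : IsOpen s) {w : X → ℝ} (hw : ContinuousOn w s) (hw0 : ∀ x ∈ s, w x ≠ 0)
    {f : ι → X → ℝ} {g : X → ℝ}
    (h : TendstoVaguelyOn s (fun n x => w x * f n x) l (fun x => w x * g x) μ) :
    TendstoVaguelyOn s f l g μ := by
  intro ψ hψ hψc hψs
  have hsupp : tsupport (fun x => (w x)⁻¹ * ψ x) ⊆ tsupport ψ := tsupport_mul_subset_right
  have hcont : Continuous fun x => (w x)⁻¹ * ψ x :=
    ((hw.inv₀ hw0).mul hψ.continuousOn).continuous_of_tsupport_subset hs (hsupp.trans hψs)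
  have hcancel (k : X → ℝ) :
      ∫ x in s, w x * k x * ((w x)⁻¹ * ψ x) ∂μ = ∫ x in s, k x * ψ x ∂μ := by
    refine setIntegral_congr_fun hs.measurableSet fun x hx => ?_
    have := hw0 x hx
    field_simp
  simpa only [hcancel] using h _ hcont hψc.mul_left (hsupp.trans hψs)

lemma locallyIntegrableOn_of_memLp_mul [LocallyCompactSpace X] [T2Space X]
    [OpensMeasurableSpace X] [IsLocallyFiniteMeasure μ] (hs : IsOpen s) {w : X → ℝ}
    (hw : ContinuousOn w s) (hw0 : ∀ x ∈ s, w x ≠ 0) {p : ENNReal} (hp : 1 ≤ p) {f : X → ℝ}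
    (hf : MemLp (fun x => w x * f x) p (μ.restrict s)) : LocallyIntegrableOn f s μ := by
  have hwf : LocallyIntegrableOn (fun x => w x * f x) s μ :=
    locallyIntegrableOn_of_locallyIntegrable_restrict (hf.locallyIntegrable hp)
  refine (hwf.continuousOn_mul (hw.inv₀ hw0) hs.isLocallyClosed).congr ?_
  filter_upwards [ae_restrict_mem hs.measurableSet] with x hx
  exact inv_mul_cancel_left₀ (hw0 x hx) _

end VagueConvergence

section WeakDerivative

variable {ι E : Type*} [NormedAddCommGroup E] [NormedSpace ℝ E] [MeasurableSpace E]
  {μ : Measure E} {s : Set E}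

/-- `g` is the weak derivative of `u` on `s` in the direction `e`, with respect to `μ`; the partial
derivatives on `ℝ × ℝ` are the directions `(1, 0)` and `(0, 1)`. -/
def HasWeakLineDerivOn (s : Set E) (e : E) (u g : E → ℝ) (μ : Measure E) : Prop :=
  LocallyIntegrableOn u s μ ∧ LocallyIntegrableOn g s μ ∧
  ∀ φ : E → ℝ, ContDiff ℝ (⊤ : ℕ∞) φ ∧ HasCompactSupport φ ∧ tsupport φ ⊆ s →
    ∫ x in s, u x * fderiv ℝ φ x e ∂μ = - ∫ x in s, g x * φ x ∂μ

lemma hasWeakDerivXOn_iff {s : Set (ℝ × ℝ)} {u g : ℝ × ℝ → ℝ} :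
    HasWeakDerivXOn s u g ↔ HasWeakLineDerivOn s (1, 0) u g volume :=
  Iff.rfl

lemma hasWeakDerivYOn_iff {s : Set (ℝ × ℝ)} {u g : ℝ × ℝ → ℝ} :
    HasWeakDerivYOn s u g ↔ HasWeakLineDerivOn s (0, 1) u g volume :=
  Iff.rfl

theorem HasWeakLineDerivOn.of_tendstoVaguelyOn {l : Filter ι} [l.NeBot] {e : E} {u g : ι → E → ℝ}
    {v h : E → ℝ} (hderiv : ∀ n, HasWeakLineDerivOn s e (u n) (g n) μ)
    (hv : LocallyIntegrableOn v s μ) (hh : LocallyIntegrableOn h s μ)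
    (huv : TendstoVaguelyOn s u l v μ) (hgh : TendstoVaguelyOn s g l h μ) :
    HasWeakLineDerivOn s e v h μ := by
  refine ⟨hv, hh, fun φ hφ => ?_⟩
  obtain ⟨hφd, hφc, hφs⟩ := hφ
  have hcont : Continuous fun x => fderiv ℝ φ x e :=
    (hφd.continuous_fderiv (by simp)).clm_apply continuous_const
  have hlhs := huv _ hcont (hφc.fderiv_apply ℝ e) ((tsupport_fderiv_apply_subset ℝ e).trans hφs)
  simp only [(hderiv _).2.2 φ ⟨hφd, hφc, hφs⟩] at hlhs
  exact tendsto_nhds_unique hlhs (hgh φ hφd.continuous hφc hφs).neg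

theorem exists_hasWeakLineDerivOn_tendsto_lpNorm_mul_sub [BorelSpace E] [LocallyCompactSpace E]
    [IsLocallyFiniteMeasure μ] [Nonempty ι] [SemilatticeSup ι] (hs : IsOpen s)
    {w : E → ℝ} (hw : ContinuousOn w s) (hw0 : ∀ x ∈ s, w x ≠ 0)
    {p q : ENNReal} [Fact (1 ≤ p)] [Fact (1 ≤ q)] {e : E} {u g : ι → E → ℝ} {v : E → ℝ}
    (hderiv : ∀ n, HasWeakLineDerivOn s e (u n) (g n) μ)
    (hu : ∀ n, MemLp (u n) p (μ.restrict s)) (hv : MemLp v p (μ.restrict s))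
    (huv : Tendsto (fun n => lpNorm (fun x => u n x - v x) p (μ.restrict s)) atTop (nhds 0))
    (hg : ∀ n, MemLp (fun x => w x * g n x) q (μ.restrict s))
    (hcau : ∀ ε > 0, ∃ N, ∀ m ≥ N, ∀ n ≥ N,
      lpNorm (fun x => w x * (g m x - g n x)) q (μ.restrict s) < ε) :
    ∃ h : E → ℝ, HasWeakLineDerivOn s e v h μ ∧ MemLp (fun x => w x * h x) q (μ.restrict s) ∧
      Tendsto (fun n => lpNorm (fun x => w x * (g n x - h x)) q (μ.restrict s)) atTop
        (nhds 0) := by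
  have hw0_ae : ∀ᵐ x ∂μ.restrict s, w x ≠ 0 :=
    (ae_restrict_mem hs.measurableSet).mono hw0
  obtain ⟨h, hh, hgh⟩ := exists_memLp_mul_tendsto_lpNorm_mul_sub hw0_ae hg hcau
  refine ⟨h, .of_tendstoVaguelyOn (l := atTop) hderiv ?_ ?_ ?_ ?_, hh, hgh⟩
  · exact locallyIntegrableOn_of_locallyIntegrable_restrict (hv.locallyIntegrable Fact.out)
  · exact locallyIntegrableOn_of_memLp_mul hs hw hw0 Fact.out hh
  · exact tendstoVaguelyOn_of_tendsto_lpNorm_sub hu hv huv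
  · simp only [mul_sub] at hgh
    exact (tendstoVaguelyOn_of_tendsto_lpNorm_sub hg hh hgh).of_mul_left hs hw hw0

end WeakDerivative

lemma isOpen_Omega : IsOpen Omega := isOpen_Ioo.prod isOpen_Ioo

lemma snd_rpow_ne_zero_of_mem_Omega (α : ℝ) : ∀ x ∈ Omega, x.2 ^ α ≠ 0 :=
  fun _ hx => (Real.rpow_pos_of_pos hx.2.1 α).ne'

lemma fst_rpow_ne_zero_of_mem_Omega (α : ℝ) : ∀ x ∈ Omega, x.1 ^ α ≠ 0 :=
  fun _ hx => (Real.rpow_pos_of_pos hx.1.1 α).ne'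

lemma continuousOn_snd_rpow_Omega (α : ℝ) : ContinuousOn (fun x : ℝ × ℝ => x.2 ^ α) Omega :=
  continuousOn_snd.rpow_const fun _ hx => .inl hx.2.1.ne'

lemma continuousOn_fst_rpow_Omega (α : ℝ) : ContinuousOn (fun x : ℝ × ℝ => x.1 ^ α) Omega :=
  continuousOn_fst.rpow_const fun _ hx => .inl hx.1.1.ne'

section Norm

variable {α₁ α₂ : ℝ} {u gx gy v hx hy : ℝ × ℝ → ℝ}

lemma MemH1.H1Norm_sub (hu : MemH1 α₁ α₂ u gx gy) (hv : MemH1 α₁ α₂ v hx hy) :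
    H1Norm α₁ α₂ (fun p => u p - v p) (fun p => gx p - hx p) (fun p => gy p - hy p) =
      √(lpNorm (fun p => u p - v p) 2 (volume.restrict Omega) ^ 2 +
        lpNorm (fun p => p.2 ^ α₁ * (gx p - hx p)) 2 (volume.restrict Omega) ^ 2 +
        lpNorm (fun p => p.1 ^ α₂ * (gy p - hy p)) 2 (volume.restrict Omega) ^ 2) := by
  have memLp_sub : MemLp (fun p => u p - v p) 2 (volume.restrict Omega) := hu.memL2.sub hv.memL2
  have memLp_subX : MemLp (fun p => p.2 ^ α₁ * (gx p - hx p)) 2 (volume.restrict Omega) := by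
    simp only [mul_sub]
    exact hu.wgx.sub hv.wgx
  have memLp_subY : MemLp (fun p => p.1 ^ α₂ * (gy p - hy p)) 2 (volume.restrict Omega) := by
    simp only [mul_sub]
    exact hu.wgy.sub hv.wgy
  rw [H1Norm, lpNorm_two_sq_eq_integral_sq memLp_sub.1, lpNorm_two_sq_eq_integral_sq memLp_subX.1,
    lpNorm_two_sq_eq_integral_sq memLp_subY.1]

lemma MemH1.lpNorm_sub_le_H1Norm (hu : MemH1 α₁ α₂ u gx gy) (hv : MemH1 α₁ α₂ v hx hy) :
    lpNorm (fun p => u p - v p) 2 (volume.restrict Omega) ≤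
      H1Norm α₁ α₂ (fun p => u p - v p) (fun p => gx p - hx p) (fun p => gy p - hy p) := by
  rw [hu.H1Norm_sub hv, add_assoc]
  exact Real.le_sqrt_of_sq_le (le_add_of_nonneg_right (by positivity))

lemma MemH1.lpNorm_snd_rpow_mul_sub_le_H1Norm (hu : MemH1 α₁ α₂ u gx gy)
    (hv : MemH1 α₁ α₂ v hx hy) :
    lpNorm (fun p => p.2 ^ α₁ * (gx p - hx p)) 2 (volume.restrict Omega) ≤
      H1Norm α₁ α₂ (fun p => u p - v p) (fun p => gx p - hx p) (fun p => gy p - hy p) := by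
  rw [hu.H1Norm_sub hv, add_right_comm]
  exact Real.le_sqrt_of_sq_le (le_add_of_nonneg_left (by positivity))

lemma MemH1.lpNorm_fst_rpow_mul_sub_le_H1Norm (hu : MemH1 α₁ α₂ u gx gy)
    (hv : MemH1 α₁ α₂ v hx hy) :
    lpNorm (fun p => p.1 ^ α₂ * (gy p - hy p)) 2 (volume.restrict Omega) ≤
      H1Norm α₁ α₂ (fun p => u p - v p) (fun p => gx p - hx p) (fun p => gy p - hy p) := by
  rw [hu.H1Norm_sub hv]
  exact Real.le_sqrt_of_sq_le (le_add_of_nonneg_left (by positivity))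

lemma MemH1.tendsto_H1Norm_sub_zero {ι : Type*} {l : Filter ι} {u gx gy : ι → ℝ × ℝ → ℝ}
    (hu : ∀ n, MemH1 α₁ α₂ (u n) (gx n) (gy n)) (hv : MemH1 α₁ α₂ v hx hy)
    (huv : Tendsto (fun n => lpNorm (fun p => u n p - v p) 2 (volume.restrict Omega)) l (nhds 0))
    (hgx : Tendsto (fun n => lpNorm (fun p => p.2 ^ α₁ * (gx n p - hx p)) 2
      (volume.restrict Omega)) l (nhds 0))
    (hgy : Tendsto (fun n => lpNorm (fun p => p.1 ^ α₂ * (gy n p - hy p)) 2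
      (volume.restrict Omega)) l (nhds 0)) :
    Tendsto (fun n => H1Norm α₁ α₂ (fun p => u n p - v p) (fun p => gx n p - hx p)
      (fun p => gy n p - hy p)) l (nhds 0) := by
  have hsum := (((huv.pow 2).add (hgx.pow 2)).add (hgy.pow 2)).sqrt
  simpa only [(hu _).H1Norm_sub hv, ne_eq, OfNat.ofNat_ne_zero, not_false_eq_true, zero_pow,
    add_zero, Real.sqrt_zero] using hsum

end Norm

theorem H1_complete_general (α₁ α₂ : ℝ) (u gx gy : ℕ → ℝ × ℝ → ℝ)
    (hmem : ∀ n, MemH1 α₁ α₂ (u n) (gx n) (gy n))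
    (hcau : ∀ ε : ℝ, 0 < ε → ∃ N : ℕ, ∀ m ≥ N, ∀ n ≥ N,
      H1Norm α₁ α₂ (fun p => u m p - u n p) (fun p => gx m p - gx n p)
        (fun p => gy m p - gy n p) < ε) :
    ∃ v hx hy : ℝ × ℝ → ℝ, MemH1 α₁ α₂ v hx hy ∧
      Tendsto (fun n => H1Norm α₁ α₂ (fun p => u n p - v p)
        (fun p => gx n p - hx p) (fun p => gy n p - hy p)) atTop (nhds 0) := by
  obtain ⟨v, hv, huv⟩ := exists_memLp_tendsto_lpNorm_sub (fun n => (hmem n).memL2) fun ε hε =>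
    (hcau ε hε).imp fun N hN m hm n hn =>
      ((hmem m).lpNorm_sub_le_H1Norm (hmem n)).trans_lt (hN m hm n hn)
  obtain ⟨hx, hvx, hhx, hgx⟩ := exists_hasWeakLineDerivOn_tendsto_lpNorm_mul_sub isOpen_Omega
    (continuousOn_snd_rpow_Omega α₁) (snd_rpow_ne_zero_of_mem_Omega α₁)
    (fun n => hasWeakDerivXOn_iff.1 (hmem n).weakX) (fun n => (hmem n).memL2) hv huv
    (fun n => (hmem n).wgx) fun ε hε => (hcau ε hε).imp fun N hN m hm n hn =>
      ((hmem m).lpNorm_snd_rpow_mul_sub_le_H1Norm (hmem n)).trans_lt (hN m hm n hn)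
  obtain ⟨hy, hvy, hhy, hgy⟩ := exists_hasWeakLineDerivOn_tendsto_lpNorm_mul_sub isOpen_Omega
    (continuousOn_fst_rpow_Omega α₂) (fst_rpow_ne_zero_of_mem_Omega α₂)
    (fun n => hasWeakDerivYOn_iff.1 (hmem n).weakY) (fun n => (hmem n).memL2) hv huv
    (fun n => (hmem n).wgy) fun ε hε => (hcau ε hε).imp fun N hN m hm n hn =>
      ((hmem m).lpNorm_fst_rpow_mul_sub_le_H1Norm (hmem n)).trans_lt (hN m hm n hn)
  have hmem_lim : MemH1 α₁ α₂ v hx hy :=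
    ⟨hv, hasWeakDerivXOn_iff.2 hvx, hasWeakDerivYOn_iff.2 hvy, hhx, hhy⟩
  exact ⟨v, hx, hy, hmem_lim, MemH1.tendsto_H1Norm_sub_zero hmem hmem_lim huv hgx hgy⟩

/-- `𝓗¹(Ω)` with its inner-product norm is a Hilbert space: every
Cauchy sequence (together with its weak derivatives) converges in the `𝓗¹` norm to an
element of `𝓗¹(Ω)`. -/
theorem H1_complete (α₁ α₂ : ℝ) (hα₁ : α₁ ∈ Ioo (0:ℝ) (1/2)) (hα₂ : α₂ ∈ Ioo (0:ℝ) (1/2))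
    (u gx gy : ℕ → ℝ × ℝ → ℝ)
    (hmem : ∀ n, MemH1 α₁ α₂ (u n) (gx n) (gy n))
    (hcau : ∀ ε : ℝ, 0 < ε → ∃ N : ℕ, ∀ m ≥ N, ∀ n ≥ N,
      H1Norm α₁ α₂ (fun p => u m p - u n p) (fun p => gx m p - gx n p)
        (fun p => gy m p - gy n p) < ε) :
    ∃ v hx hy : ℝ × ℝ → ℝ, MemH1 α₁ α₂ v hx hy ∧
      Tendsto (fun n => H1Norm α₁ α₂ (fun p => u n p - v p)
        (fun p => gx n p - hx p) (fun p => gy n p - hy p)) atTop (nhds 0) :=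
  H1_complete_general α₁ α₂ u gx gy hmem hcau
end
end

section
/- Let δ satisfy 1/2 ≤ δ < min{1/(α₁+1), 1/(α₂+1)}. Then there exists a constant C > 0 such that for every u ∈ C_c^∞(Ω), ‖u‖_{L^{2δ/(1−δ)}(Ω)} ≤ C (∫_Ω |y^{α₁}∂ₓu|² + |x^{α₂}∂_yu|² dxdy)^{1/2}. -/
open MeasureTheory Set Filter

noncomputable section

/-!
A Gagliardo–Nirenberg argument. Since `u` vanishes near the boundary, `|u| ^ s` is at most the
integral of `s * |u| ^ (s - 1) * |∂u|` along any horizontal or vertical slice. Let `a` and `b` be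
the integrals of `s * |u| ^ (s - 1) * |∂ₓu|` and `s * |u| ^ (s - 1) * |∂_yu|` over the square, and
`m` that of `|u| ^ (2 * s)`. Multiplying the two slice bounds gives `m ≤ a * b`. Hölder's inequality
with exponents `1 / 2`, `1 / 2 - 1 / s`, `1 / s` bounds `a` by the weighted energy, `m`, and
`∫ (y ^ α₁) ^ (-s) * |u| ^ s`; the vertical slice bound estimates the latter by `b` times
`∫ y ^ (-α₁ * s)`, which is finite when `α₁ * s < 1`. Symmetrically `b` is controlled by `a`, and
the resulting cyclic system bounds `m ^ (1 / s)` by the energy. Lower exponents follow because the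
square has finite measure.
-/

open scoped ENNReal NNReal

section Product

variable {X Y : Type*} [MeasurableSpace X] [MeasurableSpace Y] {μ : Measure X} {ν : Measure Y}

lemma lintegral_prod_mul_le_of_le [SFinite ν] {f g : X × Y → ℝ≥0∞} {F : X → ℝ≥0∞}
    {G : Y → ℝ≥0∞} (hF : Measurable F) (hG : Measurable G) (hf : ∀ p, f p ≤ F p.1)
    (hg : ∀ p, g p ≤ G p.2) :
    ∫⁻ p, f p * g p ∂μ.prod ν ≤ (∫⁻ x, F x ∂μ) * ∫⁻ y, G y ∂ν :=
  calc ∫⁻ p, f p * g p ∂μ.prod ν ≤ ∫⁻ p, F p.1 * G p.2 ∂μ.prod ν :=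
        lintegral_mono fun p => mul_le_mul' (hf p) (hg p)
    _ = (∫⁻ x, F x ∂μ) * ∫⁻ y, G y ∂ν := lintegral_prod_mul hF.aemeasurable hG.aemeasurable

lemma lintegral_mul_mul_rpow_le {f g h : X → ℝ≥0∞} (hf : AEMeasurable f μ)
    (hg : AEMeasurable g μ) (hh : AEMeasurable h μ) {a b c : ℝ} (ha : 0 ≤ a) (hb : 0 ≤ b)
    (hc : 0 ≤ c) (habc : a + b + c = 1) :
    ∫⁻ x, f x ^ a * g x ^ b * h x ^ c ∂μ ≤
      (∫⁻ x, f x ∂μ) ^ a * (∫⁻ x, g x ∂μ) ^ b * (∫⁻ x, h x ∂μ) ^ c := by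
  simpa only [Fin.prod_univ_three, Matrix.cons_val] using
    ENNReal.lintegral_prod_norm_pow_le (μ := μ) Finset.univ (f := ![f, g, h]) (p := ![a, b, c])
      (by simp [Fin.forall_fin_succ, hf, hg, hh]) (by simpa [Fin.sum_univ_three] using habc)
      (by simp [Fin.forall_fin_succ, ha, hb, hc])

lemma lintegral_rpow_sub_one_mul_le {s : ℝ} (hs : 2 ≤ s) {f D w : X → ℝ≥0∞}
    (hf : AEMeasurable f μ) (hD : AEMeasurable D μ) (hw : AEMeasurable w μ)
    (hw_ne_zero : ∀ᵐ x ∂μ, w x ≠ 0) (hw_ne_top : ∀ᵐ x ∂μ, w x ≠ ⊤) :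
    ∫⁻ x, f x ^ (s - 1) * D x ∂μ ≤
      (∫⁻ x, (w x * D x) ^ 2 ∂μ) ^ (1 / 2 : ℝ) * (∫⁻ x, f x ^ (2 * s) ∂μ) ^ (1 / 2 - 1 / s) *
        (∫⁻ x, w x ^ (-s) * f x ^ s ∂μ) ^ (1 / s) := by
  have hs₀ : 0 < s := by linarith
  have hs_inv : 1 / s ≤ 1 / 2 := one_div_le_one_div_of_le (by norm_num) hs
  have split : ∀ᵐ x ∂μ, f x ^ (s - 1) * D x =
      ((w x * D x) ^ 2) ^ (1 / 2 : ℝ) * (f x ^ (2 * s)) ^ (1 / 2 - 1 / s) *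
        (w x ^ (-s) * f x ^ s) ^ (1 / s) := by
    filter_upwards [hw_ne_zero, hw_ne_top] with x hx_ne_zero hx_ne_top
    have h₁ : ((w x * D x) ^ 2) ^ (1 / 2 : ℝ) = w x * D x := by
      simpa using ENNReal.pow_rpow_inv_natCast two_ne_zero (w x * D x)
    have h₂ : (f x ^ (2 * s)) ^ (1 / 2 - 1 / s) = f x ^ (s - 2) := by
      rw [← ENNReal.rpow_mul]; congr 1; field_simp
    have h₃ : (w x ^ (-s) * f x ^ s) ^ (1 / s) = (w x)⁻¹ * f x := by
      rw [ENNReal.mul_rpow_of_nonneg _ _ (by positivity), ← ENNReal.rpow_mul, ← ENNReal.rpow_mul,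
        mul_one_div_cancel hs₀.ne', neg_mul, mul_one_div_cancel hs₀.ne', ENNReal.rpow_neg_one,
        ENNReal.rpow_one]
    have h₄ : f x ^ (s - 1) = f x ^ (s - 2) * f x := by
      rw [show s - 1 = (s - 2) + 1 by ring,
        ENNReal.rpow_add_of_nonneg _ _ (by linarith) zero_le_one, ENNReal.rpow_one]
    calc f x ^ (s - 1) * D x = (w x * (w x)⁻¹) * (f x ^ (s - 2) * f x * D x) := by
          rw [ENNReal.mul_inv_cancel hx_ne_zero hx_ne_top, one_mul, h₄]
      _ = _ := by rw [h₁, h₂, h₃]; ring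
  rw [lintegral_congr_ae split]
  exact lintegral_mul_mul_rpow_le (by fun_prop) (by fun_prop) (by fun_prop) (by norm_num)
    (by linarith) (by positivity) (by ring)

end Product

lemma rpow_half_mul_rpow_half_le_add (a b : ℝ≥0∞) : a ^ (1 / 2 : ℝ) * b ^ (1 / 2 : ℝ) ≤ a + b :=
  calc a ^ (1 / 2 : ℝ) * b ^ (1 / 2 : ℝ) ≤ (a + b) ^ (1 / 2 : ℝ) * (a + b) ^ (1 / 2 : ℝ) := by
        gcongr
        exacts [le_self_add, le_add_self]
    _ = a + b := by
        rw [← ENNReal.rpow_add_of_nonneg _ _ (by norm_num) (by norm_num)]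
        norm_num

lemma rpow_le_of_le_mul_rpow_one_sub {m K : ℝ≥0∞} {θ : ℝ} (hθ : 0 < θ) (hm : m ≠ ⊤)
    (h : m ≤ K * m ^ (1 - θ)) : m ^ θ ≤ K := by
  rcases eq_or_ne m 0 with rfl | hm₀
  · simp [ENNReal.zero_rpow_of_pos hθ]
  have hpow_ne_zero : m ^ (1 - θ) ≠ 0 := by simp [ENNReal.rpow_eq_zero_iff, hm₀, hm]
  have hpow_ne_top : m ^ (1 - θ) ≠ ⊤ := by simp [ENNReal.rpow_eq_top_iff, hm₀, hm]
  rw [← ENNReal.mul_le_mul_iff_left hpow_ne_zero hpow_ne_top, ← ENNReal.rpow_add _ _ hm₀ hm]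
  simpa using h

lemma rpow_le_of_cross_bounds {s : ℝ} (hs : 2 ≤ s) {a b I G H c₁ c₂ : ℝ≥0∞} (ha : a ≠ ⊤)
    (hb : b ≠ ⊤) (hI : I ≤ a * b) (ha_le : a ≤ G * I ^ (1 / 2 - 1 / s) * (c₁ * b) ^ (1 / s))
    (hb_le : b ≤ H * I ^ (1 / 2 - 1 / s) * (c₂ * a) ^ (1 / s)) :
    I ^ (1 / s) ≤ (c₁ * c₂) ^ (1 / s) * (G * H) := by
  have hs₀ : 0 < 1 / s := by positivity
  have hs_inv : 0 ≤ 1 / 2 - 1 / s := sub_nonneg.2 (one_div_le_one_div_of_le (by norm_num) hs)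
  have absorb : a * b ≤ (c₁ * c₂) ^ (1 / s) * (G * H) * (a * b) ^ (1 - 1 / s) :=
    calc a * b ≤ G * I ^ (1 / 2 - 1 / s) * (c₁ * b) ^ (1 / s) *
          (H * I ^ (1 / 2 - 1 / s) * (c₂ * a) ^ (1 / s)) := mul_le_mul' ha_le hb_le
      _ ≤ G * (a * b) ^ (1 / 2 - 1 / s) * (c₁ * b) ^ (1 / s) *
          (H * (a * b) ^ (1 / 2 - 1 / s) * (c₂ * a) ^ (1 / s)) := by gcongr
      _ = (c₁ * c₂) ^ (1 / s) * (G * H) *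
          ((a * b) ^ (1 / 2 - 1 / s) * (a * b) ^ (1 / 2 - 1 / s) * (a * b) ^ (1 / s)) := by
        simp only [ENNReal.mul_rpow_of_nonneg _ _ hs₀.le]
        ring
      _ = (c₁ * c₂) ^ (1 / s) * (G * H) * (a * b) ^ (1 - 1 / s) := by
        rw [← ENNReal.rpow_add_of_nonneg _ _ hs_inv hs_inv,
          ← ENNReal.rpow_add_of_nonneg _ _ (by linarith) hs₀.le]
        ring_nf
  exact (ENNReal.rpow_le_rpow hI hs₀.le).trans
    (rpow_le_of_le_mul_rpow_one_sub hs₀ (ENNReal.mul_ne_top ha hb) absorb)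

section Slices

variable {X Y : Type*} [MeasurableSpace X] [MeasurableSpace Y] {μ : Measure X} {ν : Measure Y}
  [SFinite μ] [SFinite ν]

theorem lintegral_rpow_le_of_slice_bounds {s : ℝ} (hs : 2 ≤ s) {f D₁ D₂ : X × Y → ℝ≥0∞}
    {w₁ : Y → ℝ≥0∞} {w₂ : X → ℝ≥0∞} (hf : Measurable f) (hD₁ : Measurable D₁)
    (hD₂ : Measurable D₂) (hw₁ : Measurable w₁) (hw₂ : Measurable w₂)
    (hw₁_ne_zero : ∀ᵐ y ∂ν, w₁ y ≠ 0) (hw₁_ne_top : ∀ᵐ y ∂ν, w₁ y ≠ ⊤)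
    (hw₂_ne_zero : ∀ᵐ x ∂μ, w₂ x ≠ 0) (hw₂_ne_top : ∀ᵐ x ∂μ, w₂ x ≠ ⊤)
    (hx : ∀ x y, f (x, y) ^ s ≤ ∫⁻ t, f (t, y) ^ (s - 1) * D₁ (t, y) ∂μ)
    (hy : ∀ x y, f (x, y) ^ s ≤ ∫⁻ t, f (x, t) ^ (s - 1) * D₂ (x, t) ∂ν)
    (hfin₁ : ∫⁻ p, f p ^ (s - 1) * D₁ p ∂μ.prod ν ≠ ⊤)
    (hfin₂ : ∫⁻ p, f p ^ (s - 1) * D₂ p ∂μ.prod ν ≠ ⊤) :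
    (∫⁻ p, f p ^ (2 * s) ∂μ.prod ν) ^ (1 / s) ≤
      ((∫⁻ y, w₁ y ^ (-s) ∂ν) * ∫⁻ x, w₂ x ^ (-s) ∂μ) ^ (1 / s) *
        ((∫⁻ p, (w₁ p.2 * D₁ p) ^ 2 ∂μ.prod ν) ^ (1 / 2 : ℝ) *
          (∫⁻ p, (w₂ p.1 * D₂ p) ^ 2 ∂μ.prod ν) ^ (1 / 2 : ℝ)) := by
  have hs₀ : 0 ≤ s := by linarith
  have hg₁ : Measurable fun p => f p ^ (s - 1) * D₁ p := by fun_prop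
  have hg₂ : Measurable fun p => f p ^ (s - 1) * D₂ p := by fun_prop
  have hmass : ∫⁻ p, f p ^ (2 * s) ∂μ.prod ν ≤
      (∫⁻ p, f p ^ (s - 1) * D₁ p ∂μ.prod ν) * ∫⁻ p, f p ^ (s - 1) * D₂ p ∂μ.prod ν := by
    simp only [two_mul, ENNReal.rpow_add_of_nonneg _ _ hs₀ hs₀]
    rw [lintegral_prod_symm' _ hg₁, lintegral_prod _ hg₂.aemeasurable, mul_comm]
    exact lintegral_prod_mul_le_of_le hg₂.lintegral_prod_right' hg₁.lintegral_prod_left'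
      (fun p => hy p.1 p.2) (fun p => hx p.1 p.2)
  have hweight₁ : ∫⁻ p, w₁ p.2 ^ (-s) * f p ^ s ∂μ.prod ν ≤
      (∫⁻ y, w₁ y ^ (-s) ∂ν) * ∫⁻ p, f p ^ (s - 1) * D₂ p ∂μ.prod ν := by
    simp only [mul_comm (w₁ _ ^ (-s))]
    rw [lintegral_prod _ hg₂.aemeasurable, mul_comm]
    exact lintegral_prod_mul_le_of_le hg₂.lintegral_prod_right' (hw₁.pow_const _)
      (fun p => hy p.1 p.2) (fun _ => le_rfl)
  have hweight₂ : ∫⁻ p, w₂ p.1 ^ (-s) * f p ^ s ∂μ.prod ν ≤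
      (∫⁻ x, w₂ x ^ (-s) ∂μ) * ∫⁻ p, f p ^ (s - 1) * D₁ p ∂μ.prod ν := by
    rw [lintegral_prod_symm' _ hg₁]
    exact lintegral_prod_mul_le_of_le (hw₂.pow_const _) hg₁.lintegral_prod_left'
      (fun _ => le_rfl) (fun p => hx p.1 p.2)
  have holder₁ := lintegral_rpow_sub_one_mul_le (μ := μ.prod ν) (w := fun p => w₁ p.2) hs
    hf.aemeasurable hD₁.aemeasurable (by fun_prop)
    (Measure.quasiMeasurePreserving_snd.ae hw₁_ne_zero)
    (Measure.quasiMeasurePreserving_snd.ae hw₁_ne_top)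
  have holder₂ := lintegral_rpow_sub_one_mul_le (μ := μ.prod ν) (w := fun p => w₂ p.1) hs
    hf.aemeasurable hD₂.aemeasurable (by fun_prop)
    (Measure.quasiMeasurePreserving_fst.ae hw₂_ne_zero)
    (Measure.quasiMeasurePreserving_fst.ae hw₂_ne_top)
  have hs_inv : 0 ≤ 1 / s := by positivity
  exact rpow_le_of_cross_bounds hs hfin₁ hfin₂ hmass
    (holder₁.trans (mul_le_mul_right (ENNReal.rpow_le_rpow hweight₁ hs_inv) _))
    (holder₂.trans (mul_le_mul_right (ENNReal.rpow_le_rpow hweight₂ hs_inv) _))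

end Slices

lemma ofReal_mul_enorm_sq {r : ℝ} (hr : 0 ≤ r) (d : ℝ) :
    (ENNReal.ofReal r * ‖d‖ₑ) ^ 2 = ENNReal.ofReal ((r * d) ^ 2) := by
  rw [← Real.enorm_of_nonneg hr, ← enorm_mul, ← enorm_pow, Real.enorm_of_nonneg (sq_nonneg _)]

lemma enorm_abs_rpow (x : ℝ) {r : ℝ} (hr : 0 ≤ r) : ‖|x| ^ r‖ₑ = ‖x‖ₑ ^ r := by
  rw [Real.enorm_rpow_of_nonneg (abs_nonneg x) hr, ← Real.norm_eq_abs, enorm_norm]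

lemma enorm_deriv_abs_rpow {g : ℝ → ℝ} {t s : ℝ} (hs : 1 < s) (hg : DifferentiableAt ℝ g t) :
    ‖deriv (fun t => |g t| ^ s) t‖ₑ = ‖g t‖ₑ ^ (s - 1) * ‖s * deriv g t‖ₑ := by
  have hderiv : deriv (fun t => |g t| ^ s) t = s * |g t| ^ (s - 2) * g t * deriv g t :=
    ((hasDerivAt_abs_rpow (g t) hs).comp t hg.hasDerivAt).deriv
  have habs : |(|g t| ^ (s - 2) * g t)| = |g t| ^ (s - 1) := by
    rw [abs_mul, abs_of_nonneg (by positivity : 0 ≤ |g t| ^ (s - 2)),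
      ← Real.rpow_add_one' (abs_nonneg _) (by linarith)]
    ring_nf
  calc ‖deriv (fun t => |g t| ^ s) t‖ₑ = ‖|g t| ^ (s - 2) * g t‖ₑ * ‖s * deriv g t‖ₑ := by
        rw [hderiv, ← enorm_mul]
        ring_nf
    _ = ‖g t‖ₑ ^ (s - 1) * ‖s * deriv g t‖ₑ := by
        rw [← enorm_abs_rpow (g t) (sub_nonneg.2 hs.le), ← habs, ← Real.norm_eq_abs (_ * _),
          enorm_norm]

lemma enorm_rpow_le_setLIntegral_deriv {g : ℝ → ℝ} {s : ℝ} {I : Set ℝ} (hs : 1 < s)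
    (hg : ContDiff ℝ 1 g) (hc : HasCompactSupport g) (hI : Function.support g ⊆ I) (x : ℝ) :
    ‖g x‖ₑ ^ s ≤ ∫⁻ t in I, ‖g t‖ₑ ^ (s - 1) * ‖s * deriv g t‖ₑ := by
  have hpow_supp : HasCompactSupport fun t => |g t| ^ s :=
    hc.comp_left (g := fun r => |r| ^ s) (by simp [(by linarith : s ≠ 0)])
  calc ‖g x‖ₑ ^ s = ‖|g x| ^ s‖ₑ := (enorm_abs_rpow _ (by linarith)).symm
    _ ≤ ∫⁻ t in Iic x, ‖deriv (fun t => |g t| ^ s) t‖ₑ :=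
        hpow_supp.enorm_le_lintegral_Ici_deriv (hg.norm_rpow hs) x
    _ ≤ ∫⁻ t, ‖deriv (fun t => |g t| ^ s) t‖ₑ := setLIntegral_le_lintegral _ _
    _ = ∫⁻ t, ‖g t‖ₑ ^ (s - 1) * ‖s * deriv g t‖ₑ :=
        lintegral_congr fun t => enorm_deriv_abs_rpow hs (hg.differentiable one_ne_zero t)
    _ = ∫⁻ t in I, ‖g t‖ₑ ^ (s - 1) * ‖s * deriv g t‖ₑ := by
        refine (setLIntegral_eq_of_support_subset fun t ht => hI fun hgt => ht ?_).symm
        simp [hgt, ENNReal.zero_rpow_of_pos (sub_pos.2 hs)]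

lemma lintegral_enorm_rpow_mul_ne_top {X : Type*} [TopologicalSpace X] [MeasurableSpace X]
    [OpensMeasurableSpace X] {μ : Measure X} [IsFiniteMeasureOnCompacts μ] {u g : X → ℝ}
    (hu : Continuous u) (hc : HasCompactSupport u) (hg : Continuous g) {r : ℝ} (hr : 0 < r) :
    ∫⁻ p, ‖u p‖ₑ ^ r * ‖g p‖ₑ ∂μ ≠ ⊤ := by
  have hcont : Continuous fun p => |u p| ^ r * g p :=
    (hu.abs.rpow_const fun _ => Or.inr hr.le).mul hg
  have hsupp : HasCompactSupport fun p => |u p| ^ r * g p :=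
    (hc.comp_left (g := fun x => |x| ^ r) (by simp [hr.ne'])).mul_right
  simpa only [HasFiniteIntegral, enorm_mul, enorm_abs_rpow _ hr.le, lt_top_iff_ne_top] using
    (hcont.integrable_of_hasCompactSupport hsupp).hasFiniteIntegral (μ := μ)

section SliceSupport

variable {X Y Z : Type*} [TopologicalSpace X] [TopologicalSpace Y] [Zero Z] {u : X × Y → Z}

lemma hasCompactSupport_slice_fst [R1Space X] (hu : HasCompactSupport u) (y : Y) :
    HasCompactSupport fun x => u (x, y) :=
  HasCompactSupport.intro (hu.isCompact.image continuous_fst) fun _ hx =>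
    image_eq_zero_of_notMem_tsupport fun hmem => hx ⟨_, hmem, rfl⟩

lemma hasCompactSupport_slice_snd [R1Space Y] (hu : HasCompactSupport u) (x : X) :
    HasCompactSupport fun y => u (x, y) :=
  HasCompactSupport.intro (hu.isCompact.image continuous_snd) fun _ hy =>
    image_eq_zero_of_notMem_tsupport fun hmem => hy ⟨_, hmem, rfl⟩

end SliceSupport

section PartialDerivatives

variable {u : ℝ × ℝ → ℝ}

lemma hasDerivAt_pdx {x y : ℝ} (hu : DifferentiableAt ℝ u (x, y)) :
    HasDerivAt (fun t => u (t, y)) (pdx u (x, y)) x :=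
  hu.hasFDerivAt.comp_hasDerivAt x ((hasDerivAt_id x).prodMk (hasDerivAt_const x y))

lemma hasDerivAt_pdy {x y : ℝ} (hu : DifferentiableAt ℝ u (x, y)) :
    HasDerivAt (fun t => u (x, t)) (pdy u (x, y)) y :=
  hu.hasFDerivAt.comp_hasDerivAt y ((hasDerivAt_const y x).prodMk (hasDerivAt_id y))

lemma continuous_pdx (hu : ContDiff ℝ 1 u) : Continuous (pdx u) :=
  (hu.continuous_fderiv one_ne_zero).clm_apply continuous_const

lemma continuous_pdy (hu : ContDiff ℝ 1 u) : Continuous (pdy u) :=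
  (hu.continuous_fderiv one_ne_zero).clm_apply continuous_const

lemma support_pdx_subset : Function.support (pdx u) ⊆ tsupport u := fun p hp =>
  support_fderiv_subset ℝ fun h => hp (by simp [pdx, h])

lemma support_pdy_subset : Function.support (pdy u) ⊆ tsupport u := fun p hp =>
  support_fderiv_subset ℝ fun h => hp (by simp [pdy, h])

variable {s : ℝ} {I J : Set ℝ}

lemma enorm_rpow_le_setLIntegral_pdx (hs : 1 < s) (hu : ContDiff ℝ 1 u)
    (hc : HasCompactSupport u) (hI : Function.support u ⊆ Prod.fst ⁻¹' I) (x y : ℝ) :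
    ‖u (x, y)‖ₑ ^ s ≤ ∫⁻ t in I, ‖u (t, y)‖ₑ ^ (s - 1) * ‖s * pdx u (t, y)‖ₑ := by
  have hslice : ContDiff ℝ 1 fun t => u (t, y) := hu.comp (contDiff_id.prodMk contDiff_const)
  have hderiv : ∀ t, deriv (fun t => u (t, y)) t = pdx u (t, y) := fun t =>
    (hasDerivAt_pdx (hu.differentiable one_ne_zero _)).deriv
  simpa only [hderiv] using enorm_rpow_le_setLIntegral_deriv (I := I) hs hslice
    (hasCompactSupport_slice_fst hc y) (fun t ht => hI ht) x

lemma enorm_rpow_le_setLIntegral_pdy (hs : 1 < s) (hu : ContDiff ℝ 1 u)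
    (hc : HasCompactSupport u) (hJ : Function.support u ⊆ Prod.snd ⁻¹' J) (x y : ℝ) :
    ‖u (x, y)‖ₑ ^ s ≤ ∫⁻ t in J, ‖u (x, t)‖ₑ ^ (s - 1) * ‖s * pdy u (x, t)‖ₑ := by
  have hslice : ContDiff ℝ 1 fun t => u (x, t) := hu.comp (contDiff_const.prodMk contDiff_id)
  have hderiv : ∀ t, deriv (fun t => u (x, t)) t = pdy u (x, t) := fun t =>
    (hasDerivAt_pdy (hu.differentiable one_ne_zero _)).deriv
  simpa only [hderiv] using enorm_rpow_le_setLIntegral_deriv (I := J) hs hslice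
    (hasCompactSupport_slice_snd hc x) (fun t ht => hJ ht) y

theorem lintegral_enorm_rpow_le_weighted (hs : 2 ≤ s) {w₁ w₂ : ℝ → ℝ≥0∞}
    (hw₁ : Measurable w₁) (hw₂ : Measurable w₂)
    (hw₁_ne_zero : ∀ᵐ y ∂volume.restrict J, w₁ y ≠ 0)
    (hw₁_ne_top : ∀ᵐ y ∂volume.restrict J, w₁ y ≠ ⊤)
    (hw₂_ne_zero : ∀ᵐ x ∂volume.restrict I, w₂ x ≠ 0)
    (hw₂_ne_top : ∀ᵐ x ∂volume.restrict I, w₂ x ≠ ⊤) (hu : ContDiff ℝ 1 u)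
    (hc : HasCompactSupport u) (hIJ : Function.support u ⊆ I ×ˢ J) :
    (∫⁻ p in I ×ˢ J, ‖u p‖ₑ ^ (2 * s)) ^ (1 / s) ≤
      ((∫⁻ y in J, w₁ y ^ (-s)) * ∫⁻ x in I, w₂ x ^ (-s)) ^ (1 / s) * (‖s‖ₑ ^ 2 *
        ∫⁻ p in I ×ˢ J, ((w₁ p.2 * ‖pdx u p‖ₑ) ^ 2 + (w₂ p.1 * ‖pdy u p‖ₑ) ^ 2)) := by
  have hu_cont := hu.continuous
  have hpdx := continuous_pdx hu
  have hpdy := continuous_pdy hu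
  have hpdx_s : Continuous fun p => s * pdx u p := by fun_prop
  have hpdy_s : Continuous fun p => s * pdy u p := by fun_prop
  have hone : 1 < s := by linarith
  have henergy : ∫⁻ p in I ×ˢ J, (w₁ p.2 * ‖s * pdx u p‖ₑ) ^ 2 +
      (w₂ p.1 * ‖s * pdy u p‖ₑ) ^ 2 = ‖s‖ₑ ^ 2 *
        ∫⁻ p in I ×ˢ J, ((w₁ p.2 * ‖pdx u p‖ₑ) ^ 2 + (w₂ p.1 * ‖pdy u p‖ₑ) ^ 2) := by
    rw [← lintegral_const_mul _ (by fun_prop)]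
    refine lintegral_congr fun p => ?_
    rw [enorm_mul, enorm_mul]
    ring
  rw [← henergy, lintegral_add_left (by fun_prop), Measure.volume_eq_prod, ← Measure.prod_restrict]
  refine (lintegral_rpow_le_of_slice_bounds hs (by fun_prop) (by fun_prop) (by fun_prop) hw₁ hw₂
    hw₁_ne_zero hw₁_ne_top hw₂_ne_zero hw₂_ne_top
    (enorm_rpow_le_setLIntegral_pdx hone hu hc fun p hp => (hIJ hp).1)
    (enorm_rpow_le_setLIntegral_pdy hone hu hc fun p hp => (hIJ hp).2) ?_ ?_).trans
    (mul_le_mul_right (rpow_half_mul_rpow_half_le_add _ _) _)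
  all_goals rw [Measure.prod_restrict, ← Measure.volume_eq_prod]
  · exact lintegral_enorm_rpow_mul_ne_top hu_cont hc hpdx_s (sub_pos.2 hone)
  · exact lintegral_enorm_rpow_mul_ne_top hu_cont hc hpdy_s (sub_pos.2 hone)

end PartialDerivatives

lemma setLIntegral_Ioo_ofReal_rpow_rpow_ne_top {α r : ℝ} (h : -1 < α * r) :
    ∫⁻ y in Ioo (0 : ℝ) 1, ENNReal.ofReal (y ^ α) ^ r ≠ ⊤ := by
  have hint : IntegrableOn (fun y : ℝ => y ^ (α * r)) (Ioo 0 1) :=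
    (intervalIntegral.integrableOn_Ioo_rpow_iff zero_lt_one).2 h
  refine ne_of_eq_of_ne (setLIntegral_congr_fun measurableSet_Ioo fun y hy => ?_)
    hint.setLIntegral_lt_top.ne
  rw [ENNReal.ofReal_rpow_of_pos (Real.rpow_pos_of_pos hy.1 _), ← Real.rpow_mul hy.1.le]

lemma ae_ofReal_rpow_ne_zero (α : ℝ) :
    ∀ᵐ y ∂volume.restrict (Ioo (0 : ℝ) 1), ENNReal.ofReal (y ^ α) ≠ 0 :=
  ae_restrict_of_forall_mem measurableSet_Ioo fun _ hy =>
    (ENNReal.ofReal_pos.2 (Real.rpow_pos_of_pos hy.1 _)).ne'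

lemma ofReal_integral_rpow_le_eLpNorm {X : Type*} [MeasurableSpace X] {μ : Measure X}
    [IsProbabilityMeasure μ] {f : X → ℝ} {q r : ℝ} (hq : 0 < q) (hqr : q ≤ r)
    (hf : MemLp f (ENNReal.ofReal q) μ) :
    ENNReal.ofReal ((∫ x, |f x| ^ q ∂μ) ^ q⁻¹) ≤ eLpNorm f (ENNReal.ofReal r) μ := by
  have hnorm := hf.eLpNorm_eq_integral_rpow_norm (by simpa using hq) ENNReal.ofReal_ne_top
  simp only [ENNReal.toReal_ofReal hq.le, Real.norm_eq_abs] at hnorm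
  rw [← hnorm]
  exact eLpNorm_le_eLpNorm_of_exponent_le (ENNReal.ofReal_le_ofReal hqr) hf.aestronglyMeasurable

/-- The energy density `|y ^ α₁ ∂ₓu|² + |x ^ α₂ ∂_yu|²`, whose integral over `Omega` is the
degenerate Dirichlet energy of `u`. -/
def weightedGradSq (α₁ α₂ : ℝ) (u : ℝ × ℝ → ℝ) (p : ℝ × ℝ) : ℝ :=
  (p.2 ^ α₁ * pdx u p) ^ 2 + (p.1 ^ α₂ * pdy u p) ^ 2

section UnitSquare

lemma measurableSet_Omega : MeasurableSet Omega := measurableSet_Ioo.prod measurableSet_Ioo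

instance isProbabilityMeasure_restrict_Omega :
    IsProbabilityMeasure ((volume : Measure (ℝ × ℝ)).restrict Omega) :=
  ⟨by simp [Omega, Measure.volume_eq_prod]⟩

variable {α₁ α₂ : ℝ} {u : ℝ × ℝ → ℝ}

lemma hasCompactSupport_of_tsupport_subset_Omega (hΩ : tsupport u ⊆ Omega) :
    HasCompactSupport u :=
  Metric.isCompact_of_isClosed_isBounded (isClosed_tsupport u)
    ((Metric.isBounded_Ioo 0 1).prod (Metric.isBounded_Ioo 0 1) |>.subset hΩ)

lemma weightedGradSq_nonneg (p : ℝ × ℝ) : 0 ≤ weightedGradSq α₁ α₂ u p := by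
  unfold weightedGradSq
  positivity

lemma support_weightedGradSq_subset :
    Function.support (weightedGradSq α₁ α₂ u) ⊆ tsupport u := by
  intro p hp
  by_contra hpu
  have hpdx : pdx u p = 0 := by_contra fun h => hpu (support_pdx_subset h)
  have hpdy : pdy u p = 0 := by_contra fun h => hpu (support_pdy_subset h)
  exact hp (by simp [weightedGradSq, hpdx, hpdy])

lemma continuous_weightedGradSq (hu : ContDiff ℝ 1 u) (hΩ : tsupport u ⊆ Omega) :
    Continuous (weightedGradSq α₁ α₂ u) := by
  refine continuous_of_tsupport fun p hp => ?_
  have hpΩ : p ∈ Omega :=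
    hΩ (closure_minimal support_weightedGradSq_subset (isClosed_tsupport u) hp)
  have hw₁ : ContinuousAt (fun p : ℝ × ℝ => p.2 ^ α₁) p :=
    continuousAt_snd.rpow_const (Or.inl hpΩ.2.1.ne')
  have hw₂ : ContinuousAt (fun p : ℝ × ℝ => p.1 ^ α₂) p :=
    continuousAt_fst.rpow_const (Or.inl hpΩ.1.1.ne')
  exact ((hw₁.mul (continuous_pdx hu).continuousAt).pow 2).add
    ((hw₂.mul (continuous_pdy hu).continuousAt).pow 2)

lemma integrable_weightedGradSq (hu : ContDiff ℝ 1 u) (hΩ : tsupport u ⊆ Omega) :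
    Integrable (weightedGradSq α₁ α₂ u) :=
  (continuous_weightedGradSq hu hΩ).integrable_of_hasCompactSupport
    ((hasCompactSupport_of_tsupport_subset_Omega hΩ).mono' support_weightedGradSq_subset)

lemma setLIntegral_weightedGradSq (hu : ContDiff ℝ 1 u) (hΩ : tsupport u ⊆ Omega) :
    ∫⁻ p in Omega, ((ENNReal.ofReal (p.2 ^ α₁) * ‖pdx u p‖ₑ) ^ 2 +
      (ENNReal.ofReal (p.1 ^ α₂) * ‖pdy u p‖ₑ) ^ 2) =
      ENNReal.ofReal (∫ p in Omega, weightedGradSq α₁ α₂ u p) := by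
  rw [ofReal_integral_eq_lintegral_ofReal (integrable_weightedGradSq hu hΩ).restrict
    (ae_of_all _ weightedGradSq_nonneg)]
  refine setLIntegral_congr_fun measurableSet_Omega fun p hp => ?_
  rw [weightedGradSq, ENNReal.ofReal_add (sq_nonneg _) (sq_nonneg _),
    ofReal_mul_enorm_sq (Real.rpow_nonneg hp.2.1.le _),
    ofReal_mul_enorm_sq (Real.rpow_nonneg hp.1.1.le _)]

lemma exists_lintegral_enorm_rpow_le_weightedGradSq {s : ℝ} (hs : 2 ≤ s) (h₁ : α₁ * s < 1)
    (h₂ : α₂ * s < 1) :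
    ∃ K : ℝ≥0, ∀ u : ℝ × ℝ → ℝ, ContDiff ℝ 1 u → tsupport u ⊆ Omega →
      (∫⁻ p in Omega, ‖u p‖ₑ ^ (2 * s)) ^ (1 / s) ≤
        K * ENNReal.ofReal (∫ p in Omega, weightedGradSq α₁ α₂ u p) := by
  have hfin {α : ℝ} (h : α * s < 1) :
      ∫⁻ y in Ioo (0 : ℝ) 1, ENNReal.ofReal (y ^ α) ^ (-s) ≠ ⊤ :=
    setLIntegral_Ioo_ofReal_rpow_rpow_ne_top (by linarith)
  obtain ⟨K, hK⟩ : ∃ K : ℝ≥0, (K : ℝ≥0∞) =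
      ((∫⁻ y in Ioo (0 : ℝ) 1, ENNReal.ofReal (y ^ α₁) ^ (-s)) *
        ∫⁻ x in Ioo (0 : ℝ) 1, ENNReal.ofReal (x ^ α₂) ^ (-s)) ^ (1 / s) * ‖s‖ₑ ^ 2 :=
    WithTop.ne_top_iff_exists.1 <| ENNReal.mul_ne_top
      (ENNReal.rpow_ne_top_of_nonneg (by positivity) (ENNReal.mul_ne_top (hfin h₁) (hfin h₂)))
      (ENNReal.pow_ne_top enorm_ne_top)
  refine ⟨K, fun u hu hΩ => ?_⟩
  rw [hK, ← setLIntegral_weightedGradSq hu hΩ, mul_assoc]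
  exact lintegral_enorm_rpow_le_weighted hs (by fun_prop) (by fun_prop)
    (ae_ofReal_rpow_ne_zero α₁) (ae_of_all _ fun _ => ENNReal.ofReal_ne_top)
    (ae_ofReal_rpow_ne_zero α₂) (ae_of_all _ fun _ => ENNReal.ofReal_ne_top) hu
    (hasCompactSupport_of_tsupport_subset_Omega hΩ) ((subset_tsupport u).trans hΩ)

lemma exists_eLpNorm_le_sqrt_weightedGradSq {s : ℝ} (hs : 2 ≤ s) (h₁ : α₁ * s < 1)
    (h₂ : α₂ * s < 1) :
    ∃ K : ℝ≥0, ∀ u : ℝ × ℝ → ℝ, ContDiff ℝ 1 u → tsupport u ⊆ Omega →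
      eLpNorm u (ENNReal.ofReal (2 * s)) (volume.restrict Omega) ≤
        ENNReal.ofReal (√K * √(∫ p in Omega, weightedGradSq α₁ α₂ u p)) := by
  obtain ⟨K, hK⟩ := exists_lintegral_enorm_rpow_le_weightedGradSq hs h₁ h₂
  refine ⟨K, fun u hu hΩ => ?_⟩
  have hs₀ : 0 < 2 * s := by positivity
  calc eLpNorm u (ENNReal.ofReal (2 * s)) (volume.restrict Omega)
      = ((∫⁻ p in Omega, ‖u p‖ₑ ^ (2 * s)) ^ (1 / s)) ^ (1 / 2 : ℝ) := by
        rw [eLpNorm_eq_lintegral_rpow_enorm_toReal (by simpa using hs₀) ENNReal.ofReal_ne_top,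
          ENNReal.toReal_ofReal hs₀.le, ← ENNReal.rpow_mul, ← one_div_mul_one_div_rev]
    _ ≤ (K * ENNReal.ofReal (∫ p in Omega, weightedGradSq α₁ α₂ u p)) ^ (1 / 2 : ℝ) := by
        gcongr
        exact hK u hu hΩ
    _ = ENNReal.ofReal (√K * √(∫ p in Omega, weightedGradSq α₁ α₂ u p)) := by
        rw [← ENNReal.ofReal_coe_nnreal, ← ENNReal.ofReal_mul K.coe_nonneg,
          ENNReal.ofReal_rpow_of_nonneg
            (mul_nonneg K.coe_nonneg (integral_nonneg weightedGradSq_nonneg)) (by norm_num),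
          ← Real.sqrt_eq_rpow, Real.sqrt_mul K.coe_nonneg]

end UnitSquare

lemma mul_two_mul_div_one_sub_lt_two {α δ : ℝ} (hα : 0 < α) (hδ : δ < 1 / (α + 1)) :
    α * (2 * δ / (1 - δ)) < 2 := by
  rw [lt_div_iff₀ (by linarith)] at hδ
  have hδ_lt : δ < 1 := by nlinarith
  rw [← mul_div_assoc, div_lt_iff₀ (sub_pos.2 hδ_lt)]
  linarith

theorem weighted_sobolev_inequality_general {α₁ α₂ q : ℝ} (hα₁ : α₁ < 1 / 2) (hα₂ : α₂ < 1 / 2)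
    (hq : 0 < q) (hq₁ : α₁ * q < 2) (hq₂ : α₂ * q < 2) :
    ∃ C : ℝ, 0 < C ∧ ∀ u : ℝ × ℝ → ℝ, ContDiff ℝ 1 u → tsupport u ⊆ Omega →
      (∫ p in Omega, |u p| ^ q) ^ q⁻¹ ≤
        C * √(∫ p in Omega, ((p.2 ^ α₁ * pdx u p) ^ 2 + (p.1 ^ α₂ * pdy u p) ^ 2)) := by
  have hs {α : ℝ} (hα : α < 1 / 2) (hαq : α * q < 2) : α * max 2 (q / 2) < 1 := by
    rcases max_choice 2 (q / 2) with h | h <;> rw [h] <;> linarith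
  obtain ⟨K, hK⟩ :=
    exists_eLpNorm_le_sqrt_weightedGradSq (le_max_left 2 (q / 2)) (hs hα₁ hq₁) (hs hα₂ hq₂)
  refine ⟨√K + 1, by positivity, fun u hu hΩ => ?_⟩
  have hLp := (hu.continuous.memLp_of_hasCompactSupport (μ := volume) (p := ENNReal.ofReal q)
    (hasCompactSupport_of_tsupport_subset_Omega hΩ)).restrict Omega
  have hq_le : q ≤ 2 * max 2 (q / 2) := by linarith [le_max_right 2 (q / 2)]
  have hnorm := (ofReal_integral_rpow_le_eLpNorm hq hq_le hLp).trans (hK u hu hΩ)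
  rw [ENNReal.ofReal_le_ofReal_iff (by positivity)] at hnorm
  exact hnorm.trans (mul_le_mul_of_nonneg_right (by linarith) (Real.sqrt_nonneg _))

/-- For `1/2 ≤ δ < min{1/(α₁+1), 1/(α₂+1)}` there is `C > 0` such
that every `u ∈ C_c^∞(Ω)` satisfies
`‖u‖_{L^{2δ/(1−δ)}(Ω)} ≤ C (∫_Ω |y^{α₁}∂ₓu|² + |x^{α₂}∂_yu|²)^{1/2}`. -/
theorem weighted_sobolev_inequality (α₁ α₂ δ : ℝ)
    (hα₁ : α₁ ∈ Ioo (0:ℝ) (1/2)) (hα₂ : α₂ ∈ Ioo (0:ℝ) (1/2))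
    (hδ₁ : 1/2 ≤ δ) (hδ₂ : δ < min (1/(α₁+1)) (1/(α₂+1))) :
    ∃ C : ℝ, 0 < C ∧ ∀ u : ℝ × ℝ → ℝ, IsTest u →
      (∫ p in Omega, |u p| ^ (2*δ/(1-δ))) ^ ((1-δ)/(2*δ)) ≤
        C * Real.sqrt (∫ p in Omega,
          ((p.2 ^ α₁ * pdx u p) ^ 2 + (p.1 ^ α₂ * pdy u p) ^ 2)) := by
  obtain ⟨hδα₁, hδα₂⟩ := lt_min_iff.1 hδ₂
  have hδ_lt : δ < 1 := hδα₁.trans ((div_lt_one (by linarith [hα₁.1])).2 (by linarith [hα₁.1]))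
  have hq : 0 < 2 * δ / (1 - δ) := div_pos (by linarith) (sub_pos.2 hδ_lt)
  obtain ⟨C, hC, hbound⟩ := weighted_sobolev_inequality_general hα₁.2 hα₂.2 hq
    (mul_two_mul_div_one_sub_lt_two hα₁.1 hδα₁) (mul_two_mul_div_one_sub_lt_two hα₂.1 hδα₂)
  refine ⟨C, hC, fun u hu => ?_⟩
  simpa only [inv_div] using hbound u (hu.1.of_le (by exact_mod_cast le_top)) hu.2.2
end
end
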